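/- arXiv:1408.6974 — 3 statements merged into one kernel-verified Lean document; each statement's English description precedes it below -/
import Mathlib

section
/- Let Ω, Ω' ⊆ ℂ be open sets and f : Ω → Ω' a bijection such that f is real-differentiable on Ω, f⁻¹ is real-differentiable on Ω', and for every z ∈ Ω one has f_z(z) ≠ 0 and |μ_f(z)| < 1. Let g : Ω' → ℂ be real-differentiable on Ω' with g_z(w) ≠ 0 for all w ∈ Ω'. If the Beltrami coefficients of f⁻¹ and g agree, i.e., μ_{f⁻¹}(w) = μ_g(w) for all w ∈ Ω', then the Beltrami coefficient of the composition vanishes: for every z ∈ Ω, (g∘f)_zbar(z) = 0, so g∘f is conformal (satisfies the Cauchy–Riemann equations) at every point of Ω. -/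
/-- The Wirtinger derivative f_z(z) = (f_x(z) - i·f_y(z))/2, where f_x, f_y are the
real Fréchet derivative of f at z applied to 1 and to i respectively. -/
noncomputable def wirtZ (f : ℂ → ℂ) (z : ℂ) : ℂ :=
  (fderiv ℝ f z 1 - Complex.I * fderiv ℝ f z Complex.I) / 2

/-- The Wirtinger derivative f_zbar(z) = (f_x(z) + i·f_y(z))/2. -/
noncomputable def wirtZBar (f : ℂ → ℂ) (z : ℂ) : ℂ :=
  (fderiv ℝ f z 1 + Complex.I * fderiv ℝ f z Complex.I) / 2

/-- The Beltrami coefficient μ_f(z) = f_zbar(z) / f_z(z). -/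
noncomputable def beltrami (f : ℂ → ℂ) (z : ℂ) : ℂ := wirtZBar f z / wirtZ f z

/-!
By the chain rule `(g ∘ f)_zbar = g_z · f_zbar + g_zbar · conj f_z`, where `g` is taken at `f z`.
When `g_z` and `f_z` are nonzero, this vanishes exactly when `μ_g (f z) = -f_zbar / conj f_z`.
Since `f⁻¹ ∘ f = id` has vanishing `zbar`-derivative, `μ_{f⁻¹} (f z)` is also this value.
-/

open scoped ComplexConjugate Topology

section WirtingerCalculus

variable {f g : ℂ → ℂ} {z : ℂ}

theorem fderiv_apply_eq_wirtZ_add_wirtZBar (f : ℂ → ℂ) (z v : ℂ) :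
    fderiv ℝ f z v = wirtZ f z * v + wirtZBar f z * conj v := by
  have decomp : v = v.re + v.im * Complex.I := (Complex.re_add_im v).symm
  have fderiv_decomp :
      fderiv ℝ f z v = v.re * fderiv ℝ f z 1 + v.im * fderiv ℝ f z Complex.I := by
    calc fderiv ℝ f z v = fderiv ℝ f z (v.re • 1 + v.im • Complex.I) := by
          simp only [Complex.real_smul, mul_one, Complex.re_add_im]
      _ = v.re * fderiv ℝ f z 1 + v.im * fderiv ℝ f z Complex.I := by
          rw [map_add, map_smul, map_smul, Complex.real_smul, Complex.real_smul]
  have conj_decomp : conj v = v.re - v.im * Complex.I := by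
    apply Complex.ext <;> simp
  rw [fderiv_decomp, conj_decomp, wirtZ, wirtZBar]
  linear_combination (-(fderiv ℝ f z 1 - Complex.I * fderiv ℝ f z Complex.I) / 2) * decomp
    + v.im * fderiv ℝ f z Complex.I * Complex.I_sq

theorem wirtZ_eq_of_fderiv_apply {a b : ℂ}
    (h : ∀ v, fderiv ℝ f z v = a * v + b * conj v) : wirtZ f z = a := by
  rw [wirtZ, h, h, map_one, Complex.conj_I]
  linear_combination ((b - a) / 2) * Complex.I_sq

theorem wirtZBar_eq_of_fderiv_apply {a b : ℂ}
    (h : ∀ v, fderiv ℝ f z v = a * v + b * conj v) : wirtZBar f z = b := by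
  rw [wirtZBar, h, h, map_one, Complex.conj_I]
  linear_combination ((a - b) / 2) * Complex.I_sq

theorem fderiv_comp_apply_eq_wirtZ_add_wirtZBar (hg : DifferentiableAt ℝ g (f z))
    (hf : DifferentiableAt ℝ f z) (v : ℂ) :
    fderiv ℝ (g ∘ f) z v =
      (wirtZ g (f z) * wirtZ f z + wirtZBar g (f z) * conj (wirtZBar f z)) * v +
        (wirtZ g (f z) * wirtZBar f z + wirtZBar g (f z) * conj (wirtZ f z)) * conj v := by
  rw [fderiv_comp z hg hf, ContinuousLinearMap.comp_apply,
    fderiv_apply_eq_wirtZ_add_wirtZBar g, fderiv_apply_eq_wirtZ_add_wirtZBar f]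
  simp only [map_add, map_mul, Complex.conj_conj]
  ring

theorem wirtZ_comp (hg : DifferentiableAt ℝ g (f z)) (hf : DifferentiableAt ℝ f z) :
    wirtZ (g ∘ f) z = wirtZ g (f z) * wirtZ f z + wirtZBar g (f z) * conj (wirtZBar f z) :=
  wirtZ_eq_of_fderiv_apply (fderiv_comp_apply_eq_wirtZ_add_wirtZBar hg hf)

theorem wirtZBar_comp (hg : DifferentiableAt ℝ g (f z)) (hf : DifferentiableAt ℝ f z) :
    wirtZBar (g ∘ f) z = wirtZ g (f z) * wirtZBar f z + wirtZBar g (f z) * conj (wirtZ f z) :=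
  wirtZBar_eq_of_fderiv_apply (fderiv_comp_apply_eq_wirtZ_add_wirtZBar hg hf)

theorem fderiv_apply_of_eventuallyEq_id (h : f =ᶠ[𝓝 z] id) (v : ℂ) :
    fderiv ℝ f z v = 1 * v + 0 * conj v := by
  rw [h.fderiv_eq, fderiv_id, ContinuousLinearMap.id_apply, one_mul, zero_mul, add_zero]

theorem wirtZ_eq_one_of_eventuallyEq_id (h : f =ᶠ[𝓝 z] id) : wirtZ f z = 1 :=
  wirtZ_eq_of_fderiv_apply (fderiv_apply_of_eventuallyEq_id h)

theorem wirtZBar_eq_zero_of_eventuallyEq_id (h : f =ᶠ[𝓝 z] id) : wirtZBar f z = 0 :=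
  wirtZBar_eq_of_fderiv_apply (fderiv_apply_of_eventuallyEq_id h)

end WirtingerCalculus

section Beltrami

variable {f finv g : ℂ → ℂ} {z : ℂ}

theorem wirtZBar_comp_eq_zero_iff (hg : DifferentiableAt ℝ g (f z))
    (hf : DifferentiableAt ℝ f z) (hgz : wirtZ g (f z) ≠ 0) (hfz : wirtZ f z ≠ 0) :
    wirtZBar (g ∘ f) z = 0 ↔ beltrami g (f z) = -wirtZBar f z / conj (wirtZ f z) := by
  have hfz_conj : conj (wirtZ f z) ≠ 0 := (map_ne_zero _).2 hfz
  rw [wirtZBar_comp hg hf, beltrami, div_eq_div_iff hgz hfz_conj]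
  constructor <;> intro h <;> linear_combination h

theorem wirtZ_ne_zero_of_wirtZBar_comp_eq_zero (hg : DifferentiableAt ℝ g (f z))
    (hf : DifferentiableAt ℝ f z) (hfz : wirtZ f z ≠ 0)
    (hbar : wirtZBar (g ∘ f) z = 0) (hcomp : wirtZ (g ∘ f) z ≠ 0) :
    wirtZ g (f z) ≠ 0 := by
  intro hgz
  rw [wirtZBar_comp hg hf, hgz, zero_mul, zero_add] at hbar
  have hgzbar : wirtZBar g (f z) = 0 :=
    (mul_eq_zero.1 hbar).resolve_right ((map_ne_zero _).2 hfz)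
  exact hcomp (by rw [wirtZ_comp hg hf, hgz, hgzbar, zero_mul, zero_mul, add_zero])

theorem beltrami_of_eventually_leftInverse (hfinv : DifferentiableAt ℝ finv (f z))
    (hf : DifferentiableAt ℝ f z) (hfz : wirtZ f z ≠ 0) (hinv : finv ∘ f =ᶠ[𝓝 z] id) :
    beltrami finv (f z) = -wirtZBar f z / conj (wirtZ f z) := by
  have hbar : wirtZBar (finv ∘ f) z = 0 := wirtZBar_eq_zero_of_eventuallyEq_id hinv
  have hcomp : wirtZ (finv ∘ f) z ≠ 0 :=
    (wirtZ_eq_one_of_eventuallyEq_id hinv).trans_ne one_ne_zero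
  have hfinvz : wirtZ finv (f z) ≠ 0 :=
    wirtZ_ne_zero_of_wirtZBar_comp_eq_zero hfinv hf hfz hbar hcomp
  exact (wirtZBar_comp_eq_zero_iff hfinv hf hfinvz hfz).1 hbar

theorem composition_conformal_general (hf : DifferentiableAt ℝ f z)
    (hfinv : DifferentiableAt ℝ finv (f z)) (hg : DifferentiableAt ℝ g (f z))
    (hinv : finv ∘ f =ᶠ[𝓝 z] id) (hfz : wirtZ f z ≠ 0) (hgz : wirtZ g (f z) ≠ 0) :
    wirtZBar (g ∘ f) z = 0 ↔ beltrami finv (f z) = beltrami g (f z) := by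
  rw [wirtZBar_comp_eq_zero_iff hg hf hgz hfz,
    beltrami_of_eventually_leftInverse hfinv hf hfz hinv, eq_comm]

end Beltrami

/-- If the Beltrami coefficients of f⁻¹ and g agree, then g ∘ f is conformal. -/
theorem composition_conformal (Ω Ω' : Set ℂ) (f finv g : ℂ → ℂ)
    (hΩ : IsOpen Ω) (hΩ' : IsOpen Ω')
    (hbij : Set.BijOn f Ω Ω') (hinv : Set.InvOn finv f Ω Ω')
    (hf : ∀ z ∈ Ω, DifferentiableAt ℝ f z)
    (hfi : ∀ w ∈ Ω', DifferentiableAt ℝ finv w)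
    (hfz : ∀ z ∈ Ω, wirtZ f z ≠ 0)
    (hmu : ∀ z ∈ Ω, ‖beltrami f z‖ < 1)
    (hg : ∀ w ∈ Ω', DifferentiableAt ℝ g w)
    (hgz : ∀ w ∈ Ω', wirtZ g w ≠ 0)
    (hsame : ∀ w ∈ Ω', beltrami finv w = beltrami g w) :
    ∀ z ∈ Ω, wirtZBar (g ∘ f) z = 0 := by
  intro z hz
  have hw : f z ∈ Ω' := hbij.mapsTo hz
  have hid : finv ∘ f =ᶠ[𝓝 z] id := hinv.1.eqOn.eventuallyEq_of_mem (hΩ.mem_nhds hz)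
  exact (composition_conformal_general (hf z hz) (hfi _ hw) (hg _ hw) hid (hfz z hz)
    (hgz _ hw)).2 (hsame _ hw)
end

section
/- Let f : ℂ → ℂ be the ℝ-affine map f(z) = α·z + β·conj(z) + γ with α, β, γ ∈ ℂ and α ≠ 0 (so f_z ≡ α, f_zbar ≡ β and μ_f ≡ β/α). Let z₁ = a₁ + i·b₁, z₂ = a₂ + i·b₂, z₃ = a₃ + i·b₃ be three non-collinear points with images w₁ = f(z₁), w₂ = f(z₂), w₃ = f(z₃). Then, writing P = (b₃−b₂)·w₁ + (b₁−b₃)·w₂ + (b₂−b₁)·w₃ and Q = (a₃−a₂)·w₁ + (a₁−a₃)·w₂ + (a₂−a₁)·w₃, the denominator P + i·Q is nonzero and the constant Beltrami coefficient of f is given by μ_f = (P − i·Q)/(P + i·Q). -/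
/-!
Writing `D(u, w)` for twice the signed area of the triangle with vertices `(uᵢ, wᵢ)`, one has
`P = D(im z, w)` and `Q = D(re z, w)`, so bilinearity turns `P + iQ` and `P - iQ` into
`i D(conj z, w)` and `-i D(z, w)`. As `D` is alternating and kills constants, substituting
`w = α z + β conj z + γ` leaves only the `α` term in the first and only the `β` term in the second.
Both carry the same factor, `-2` times the doubled area of the triangle `z₁ z₂ z₃`.
-/

open Complex ComplexConjugate

section CommRing

variable {R : Type*} [CommRing R]

/-- Twice the signed area of the triangle with vertices `(u i, w i)`, i.e. the determinant with
rows `1`, `u`, `w`, as a bilinear form in the two coordinate vectors. The coordinates may lie in any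
commutative ring; over `ℂ` it is bilinear, not sesquilinear. -/
def doubleArea : LinearMap.BilinForm R (Fin 3 → R) :=
  LinearMap.mk₂ R
    (fun u w => (u 2 - u 1) * w 0 + (u 0 - u 2) * w 1 + (u 1 - u 0) * w 2)
    (fun u v w => by simp only [Pi.add_apply]; ring)
    (fun c u w => by simp only [Pi.smul_apply, smul_eq_mul]; ring)
    (fun u v w => by simp only [Pi.add_apply]; ring)
    (fun c u w => by simp only [Pi.smul_apply, smul_eq_mul]; ring)

theorem doubleArea_apply (u w : Fin 3 → R) :
    doubleArea u w = (u 2 - u 1) * w 0 + (u 0 - u 2) * w 1 + (u 1 - u 0) * w 2 :=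
  rfl

theorem doubleArea_isAlt : (doubleArea (R := R)).IsAlt := fun u => by
  rw [doubleArea_apply]; ring

theorem doubleArea_const_right (u : Fin 3 → R) (c : R) :
    doubleArea u (Function.const (Fin 3) c) = 0 := by
  simp only [doubleArea_apply, Function.const_apply]; ring

theorem doubleArea_affine_right (a b c : R) (u v : Fin 3 → R) :
    doubleArea u (a • u + b • v + Function.const (Fin 3) c) = b * doubleArea u v := by
  simp only [map_add, map_smul, doubleArea_isAlt.self_eq_zero, doubleArea_const_right,
    smul_eq_mul, mul_zero, zero_add, add_zero]

end CommRing

section Complex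

variable (z w : Fin 3 → ℂ)

theorem doubleArea_im_add_I_mul_doubleArea_re :
    doubleArea (fun i => ((z i).im : ℂ)) w + I * doubleArea (fun i => ((z i).re : ℂ)) w =
      I * doubleArea (fun i => conj (z i)) w := by
  have im_add_I_smul_re :
      (fun i => ((z i).im : ℂ)) + I • (fun i => ((z i).re : ℂ)) = I • fun i => conj (z i) := by
    ext i; apply Complex.ext <;> simp
  simpa only [map_add, map_smul, LinearMap.add_apply, LinearMap.smul_apply, smul_eq_mul]
    using congrArg (doubleArea · w) im_add_I_smul_re

theorem doubleArea_im_sub_I_mul_doubleArea_re :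
    doubleArea (fun i => ((z i).im : ℂ)) w - I * doubleArea (fun i => ((z i).re : ℂ)) w =
      -I * doubleArea z w := by
  have im_sub_I_smul_re :
      (fun i => ((z i).im : ℂ)) - I • (fun i => ((z i).re : ℂ)) = -I • z := by
    ext i; apply Complex.ext <;> simp
  simpa only [map_sub, map_smul, LinearMap.sub_apply, LinearMap.smul_apply, smul_eq_mul]
    using congrArg (doubleArea · w) im_sub_I_smul_re

theorem doubleArea_conj_self :
    doubleArea (fun i => conj (z i)) z =
      2 * I * (doubleArea (fun i => (z i).re) (fun i => (z i).im) : ℝ) := by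
  simp only [doubleArea_apply, ofReal_add, ofReal_mul, ofReal_sub, re_eq_add_conj, im_eq_sub_conj]
  field_simp
  ring

variable (α β γ : ℂ)

theorem doubleArea_im_add_I_mul_doubleArea_re_affine :
    doubleArea (fun i => ((z i).im : ℂ)) (fun i => α * z i + β * conj (z i) + γ) +
        I * doubleArea (fun i => ((z i).re : ℂ)) (fun i => α * z i + β * conj (z i) + γ) =
      -2 * (doubleArea (fun i => (z i).re) (fun i => (z i).im) : ℝ) * α := by
  have image_eq : (fun i => α * z i + β * conj (z i) + γ) =
      β • (fun i => conj (z i)) + α • z + Function.const (Fin 3) γ := by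
    ext i; simp [add_comm]
  rw [doubleArea_im_add_I_mul_doubleArea_re, image_eq, doubleArea_affine_right,
    doubleArea_conj_self]
  linear_combination 2 * α * (doubleArea (fun i => (z i).re) (fun i => (z i).im) : ℝ) * I_mul_I

theorem doubleArea_im_sub_I_mul_doubleArea_re_affine :
    doubleArea (fun i => ((z i).im : ℂ)) (fun i => α * z i + β * conj (z i) + γ) -
        I * doubleArea (fun i => ((z i).re : ℂ)) (fun i => α * z i + β * conj (z i) + γ) =
      -2 * (doubleArea (fun i => (z i).re) (fun i => (z i).im) : ℝ) * β := by
  have image_eq : (fun i => α * z i + β * conj (z i) + γ) =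
      α • z + β • (fun i => conj (z i)) + Function.const (Fin 3) γ := by
    ext i; simp
  rw [doubleArea_im_sub_I_mul_doubleArea_re, image_eq, doubleArea_affine_right,
    ← doubleArea_isAlt.neg_eq, doubleArea_conj_self]
  linear_combination 2 * β * (doubleArea (fun i => (z i).re) (fun i => (z i).im) : ℝ) * I_mul_I

end Complex

/-- The Beltrami coefficient of an ℝ-affine map f(z) = αz + β·conj(z) + γ recovered from
the images of three non-collinear points. -/
theorem beltrami_from_three_points (α β γ : ℂ) (hα : α ≠ 0)
    (z₁ z₂ z₃ : ℂ)
    (hnc : ((z₂.re - z₁.re) * (z₃.im - z₁.im) -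
        (z₃.re - z₁.re) * (z₂.im - z₁.im)) / 2 ≠ 0)
    (f : ℂ → ℂ) (hf : f = fun z => α * z + β * starRingEnd ℂ z + γ)
    (P Q : ℂ)
    (hP : P = ((z₃.im - z₂.im : ℝ) : ℂ) * f z₁ + ((z₁.im - z₃.im : ℝ) : ℂ) * f z₂ +
        ((z₂.im - z₁.im : ℝ) : ℂ) * f z₃)
    (hQ : Q = ((z₃.re - z₂.re : ℝ) : ℂ) * f z₁ + ((z₁.re - z₃.re : ℝ) : ℂ) * f z₂ +
        ((z₂.re - z₁.re : ℝ) : ℂ) * f z₃) :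
    P + Complex.I * Q ≠ 0 ∧ β / α = (P - Complex.I * Q) / (P + Complex.I * Q) := by
  let z : Fin 3 → ℂ := ![z₁, z₂, z₃]
  let D : ℝ := doubleArea (fun i => (z i).re) (fun i => (z i).im)
  have D_ne_zero : D ≠ 0 := by
    contrapose! hnc
    have area_eq : D = (z₃.re - z₂.re) * z₁.im + (z₁.re - z₃.re) * z₂.im +
        (z₂.re - z₁.re) * z₃.im := rfl
    linear_combination (hnc - area_eq) / 2
  have scale_ne_zero : (-2 * D : ℂ) ≠ 0 :=
    mul_ne_zero (by norm_num) (ofReal_ne_zero.mpr D_ne_zero)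
  have P_eq : P = doubleArea (fun i => ((z i).im : ℂ))
      (fun i => α * z i + β * conj (z i) + γ) := by
    simp [hP, hf, doubleArea_apply, z]
  have Q_eq : Q = doubleArea (fun i => ((z i).re : ℂ))
      (fun i => α * z i + β * conj (z i) + γ) := by
    simp [hQ, hf, doubleArea_apply, z]
  have add_eq : P + I * Q = -2 * D * α := by
    rw [P_eq, Q_eq, doubleArea_im_add_I_mul_doubleArea_re_affine]
  have sub_eq : P - I * Q = -2 * D * β := by
    rw [P_eq, Q_eq, doubleArea_im_sub_I_mul_doubleArea_re_affine]
  rw [add_eq, sub_eq]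
  exact ⟨mul_ne_zero scale_ne_zero hα, (mul_div_mul_left β α scale_ne_zero).symm⟩
end

section
/- Let f = u + i·v : ℂ → ℂ be real-differentiable at a point z (with u, v the real and imaginary parts), and suppose f satisfies the Beltrami equation f_zbar(z) = μ·f_z(z) at z with μ = ρ + i·η ∈ ℂ and ρ² + η² < 1. Define the 2×2 matrix M = (1/(1−ρ²−η²))·[[(ρ−1)² + η², −2η], [−2η, (1+ρ)² + η²]]. Then at the point z, M·(u_x, u_y)ᵀ = (v_y, −v_x)ᵀ, where u_x, u_y, v_x, v_y denote the partial derivatives of u and v in the directions 1 and i. (Consequently, if f is C², the vector field M·∇u is divergence-free, i.e., ∇·(M·∇u) = 0.) -/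
/-!
Write `p = f_x`, `q = f_y`. The Beltrami equation `p + i q = μ (p - i q)` is the linear relation
`(1 - μ) p = -i (1 + μ) q`. Multiplying it by the conjugate of `1 - μ` makes the coefficient of `p`
the real number `|1 - μ|²`, and since `conj (1 - μ) (1 + μ) = 1 - |μ|² + 2 i Im μ`, the real part
is the first row of the system. The second row is the first one after rotating the coordinates by
a quarter turn, which replaces `(μ, p, q)` by `(-μ, q, -p)`.
-/

section FirstOrderSystem

open Complex
open scoped ComplexConjugate

theorem wirtZBar_eq_mul_wirtZ_iff {f : ℂ → ℂ} {z μ : ℂ} {L : ℂ →L[ℝ] ℂ} (hf : HasFDerivAt f L z) :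
    wirtZBar f z = μ * wirtZ f z ↔ (1 - μ) * L 1 = -I * (1 + μ) * L I := by
  rw [wirtZBar, wirtZ, hf.fderiv]
  constructor <;> intro h
  · linear_combination 2 * h
  · linear_combination h / 2

theorem conj_one_sub_mul_one_add (μ : ℂ) :
    conj (1 - μ) * (1 + μ) = (1 - normSq μ : ℝ) + 2 * μ.im * I := by
  have sub_conj_eq : μ - conj μ = 2 * μ.im * I := mod_cast sub_conj μ
  push_cast [normSq_eq_conj_mul_self, map_sub, map_one]
  linear_combination sub_conj_eq

variable {μ p q : ℂ}

theorem normSq_one_sub_mul_eq (h : (1 - μ) * p = -I * (1 + μ) * q) :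
    (normSq (1 - μ) : ℂ) * p = (2 * μ.im - (1 - normSq μ : ℝ) * I) * q := by
  calc (normSq (1 - μ) : ℂ) * p
      = conj (1 - μ) * ((1 - μ) * p) := by rw [normSq_eq_conj_mul_self, mul_assoc]
    _ = -I * (conj (1 - μ) * (1 + μ)) * q := by rw [h]; ring
    _ = (2 * μ.im - (1 - normSq μ : ℝ) * I) * q := by
      rw [conj_one_sub_mul_one_add]
      linear_combination -2 * μ.im * q * I_mul_I

theorem normSq_one_sub_mul_re_sub_eq (h : (1 - μ) * p = -I * (1 + μ) * q) :
    normSq (1 - μ) * p.re - 2 * μ.im * q.re = (1 - normSq μ) * q.im := by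
  have re_eq := congrArg re (normSq_one_sub_mul_eq h)
  simp only [mul_re, mul_im, sub_re, sub_im, ofReal_re, ofReal_im, re_ofNat, im_ofNat, I_re,
    I_im] at re_eq
  linear_combination re_eq

theorem normSq_one_add_mul_re_sub_eq (h : (1 - μ) * p = -I * (1 + μ) * q) :
    normSq (1 + μ) * q.re - 2 * μ.im * p.re = (1 - normSq μ) * -p.im := by
  have quarter_turn : (1 - -μ) * q = -I * (1 + -μ) * -p := by
    linear_combination -I * h + (1 + μ) * q * I_mul_I
  have row := normSq_one_sub_mul_re_sub_eq quarter_turn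
  simp only [sub_neg_eq_add, normSq_neg, neg_re, neg_im] at row
  linear_combination row

theorem beltrami_pde_matrix_general {f : ℂ → ℂ} {z : ℂ} {L : ℂ →L[ℝ] ℂ} (hf : HasFDerivAt f L z)
    {ρ η : ℝ} (hμ : ρ ^ 2 + η ^ 2 ≠ 1) (hbel : wirtZBar f z = (ρ + η * I) * wirtZ f z) :
    (((ρ - 1) ^ 2 + η ^ 2) * (L 1).re + (-2 * η) * (L I).re) / (1 - ρ ^ 2 - η ^ 2) = (L I).im ∧
    ((-2 * η) * (L 1).re + ((1 + ρ) ^ 2 + η ^ 2) * (L I).re) / (1 - ρ ^ 2 - η ^ 2) =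
      -(L 1).im := by
  have denom_ne_zero : 1 - ρ ^ 2 - η ^ 2 ≠ 0 := fun h ↦ hμ (by linear_combination -h)
  have linear_relation := (wirtZBar_eq_mul_wirtZ_iff hf).mp hbel
  have first_row := normSq_one_sub_mul_re_sub_eq linear_relation
  have second_row := normSq_one_add_mul_re_sub_eq linear_relation
  simp only [normSq_apply, add_re, add_im, sub_re, sub_im, mul_re, mul_im, one_re, one_im,
    ofReal_re, ofReal_im, I_re, I_im] at first_row second_row
  rw [div_eq_iff denom_ne_zero, div_eq_iff denom_ne_zero]
  constructor
  · linear_combination first_row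
  · linear_combination second_row

end FirstOrderSystem

/-- The Beltrami equation in terms of the elliptic matrix M: M·(u_x, u_y)ᵀ = (v_y, −v_x)ᵀ. -/
theorem beltrami_pde_matrix (f : ℂ → ℂ) (z : ℂ) (hf : DifferentiableAt ℝ f z)
    (ρ η : ℝ) (hμ : ρ ^ 2 + η ^ 2 < 1)
    (hbel : wirtZBar f z = ((ρ : ℂ) + (η : ℂ) * Complex.I) * wirtZ f z)
    (ux uy vx vy : ℝ)
    (hux : ux = (fderiv ℝ f z 1).re) (huy : uy = (fderiv ℝ f z Complex.I).re)
    (hvx : vx = (fderiv ℝ f z 1).im) (hvy : vy = (fderiv ℝ f z Complex.I).im) :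
    (((ρ - 1) ^ 2 + η ^ 2) * ux + (-2 * η) * uy) / (1 - ρ ^ 2 - η ^ 2) = vy ∧
    ((-2 * η) * ux + ((1 + ρ) ^ 2 + η ^ 2) * uy) / (1 - ρ ^ 2 - η ^ 2) = -vx := by
  subst hux huy hvx hvy
  exact beltrami_pde_matrix_general hf.hasFDerivAt hμ.ne hbel
end
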